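/- A tile-set with countably infinitely many tilings produces a tiling with exactly one vector of periodicity: let τ = (Q, 𝒜) be a tile-set whose set of tilings 𝒯_τ is countable and infinite; then there exists c ∈ 𝒯_τ whose stabilizer { v ∈ ℤ² : σ_v(c) = c } is nontrivial (contains some v ≠ 0) but has infinite index in ℤ² (i.e., c has a nonzero period vector but is not periodic). -/

import Mathlib

open Set

/-- A configuration assigns a state to each cell of the plane. -/
abbrev Config (Q : Type*) : Type _ := (ℤ × ℤ) → Q

/-- The shift by a vector `v`: `σ_v c = fun x => c (x + v)`. -/
def shiftC {Q : Type*} (v : ℤ × ℤ) (c : Config Q) : Config Q := fun x => c (x + v)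

/-- The pattern `P` with (finite) domain `V` appears in `c` at translate `t`. -/
def AppearsAt {Q : Type*} (c : Config Q) (V : Finset (ℤ × ℤ)) (P : (ℤ × ℤ) → Q)
    (t : ℤ × ℤ) : Prop :=
  ∀ x ∈ V, c (x + t) = P x

/-- The pattern `P` with (finite) domain `V` appears in `c`. -/
def Appears {Q : Type*} (c : Config Q) (V : Finset (ℤ × ℤ)) (P : (ℤ × ℤ) → Q) : Prop :=
  ∃ t : ℤ × ℤ, AppearsAt c V P t

/-- The pattern preorder: `x ≼ y` iff every pattern appearing in `x` appears in `y`. -/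
def PatLe {Q : Type*} (x y : Config Q) : Prop :=
  ∀ (V : Finset (ℤ × ℤ)) (P : (ℤ × ℤ) → Q), Appears x V P → Appears y V P

/-- A set of configurations is shift-invariant. -/
def ShiftInvariant {Q : Type*} (S : Set (Config Q)) : Prop :=
  ∀ c ∈ S, ∀ v : ℤ × ℤ, shiftC v c ∈ S

/-- `c` is an isolated point of `S` (in the subspace topology). -/
def IsolatedIn {Q : Type*} [TopologicalSpace Q] (S : Set (Config Q)) (c : Config Q) : Prop :=
  ∃ U : Set (Config Q), IsOpen U ∧ U ∩ S = {c}

/-- The topological derivative: the non-isolated points of `S`. -/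
def derivSet {Q : Type*} [TopologicalSpace Q] (S : Set (Config Q)) : Set (Config Q) :=
  {c ∈ S | ¬ IsolatedIn S c}

/-- Transfinite iteration of the topological derivative (Cantor–Bendixson). -/
noncomputable def CBIter {Q : Type*} [TopologicalSpace Q] (S : Set (Config Q))
    (o : Ordinal) : Set (Config Q) :=
  Ordinal.limitRecOn o S (fun _ ih => derivSet ih)
    (fun o _ ih => ⋂ (β : {β : Ordinal // β < o}), ih β.1 β.2)

/-- The Cantor–Bendixson rank of `c` in `S`: least `λ` with `c ∉ S^{(λ)}`. -/
noncomputable def CBRank {Q : Type*} [TopologicalSpace Q] (S : Set (Config Q))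
    (c : Config Q) : Ordinal :=
  sInf {l : Ordinal | c ∉ CBIter S l}

/-- A configuration is periodic iff its shift orbit is finite (equivalently, its
stabilizer has finite index in `ℤ²`). -/
def IsPeriodic {Q : Type*} (c : Config Q) : Prop :=
  (Set.range fun v : ℤ × ℤ => shiftC v c).Finite

/-- `c` is a tiling for the tile-set with domain `V` and allowed patterns `A`. -/
def IsTiling {Q : Type*} (V : Finset (ℤ × ℤ)) (A : Set ({x // x ∈ V} → Q))
    (c : Config Q) : Prop :=
  ∀ t : ℤ × ℤ, (fun y : {x // x ∈ V} => c (t + y.1)) ∈ A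

/-- The set of tilings of a tile-set. -/
def Tilings {Q : Type*} (V : Finset (ℤ × ℤ)) (A : Set ({x // x ∈ V} → Q)) :
    Set (Config Q) :=
  {c | IsTiling V A c}


namespace Stmt19Aux

variable {Q : Type*}

lemma shift_shift (u v : ℤ × ℤ) (c : Config Q) :
    shiftC u (shiftC v c) = shiftC (u + v) c := by
  funext x
  simp only [shiftC, add_assoc]

lemma shift_zero (c : Config Q) : shiftC 0 c = c := by
  funext x
  simp [shiftC]

lemma shift_cont [TopologicalSpace Q] (v : ℤ × ℤ) :
    Continuous (shiftC v : Config Q → Config Q) := by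
  unfold shiftC
  fun_prop

lemma const_of_succ {α : Type*} (f : ℤ → α) (h : ∀ k, f (k + 1) = f k) (a b : ℤ) :
    f a = f b := by
  have key : ∀ k, f k = f 0 := by
    intro k
    induction k using Int.induction_on with
    | zero => rfl
    | succ i ih => rw [h, ih]
    | pred i ih => rw [← ih, ← h (-(i : ℤ) - 1)]; congr 1; ring
  rw [key a, key b]

lemma const_outside {α : Type*} (f : ℤ × ℤ → α) (n : ℤ) (hn : -1 ≤ n)
    (h1 : ∀ v : ℤ × ℤ, ¬ (|v.1| ≤ n ∧ |v.2| ≤ n) →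
      ¬ (|v.1 + 1| ≤ n ∧ |v.2| ≤ n) → f (v.1 + 1, v.2) = f v)
    (h2 : ∀ v : ℤ × ℤ, ¬ (|v.1| ≤ n ∧ |v.2| ≤ n) →
      ¬ (|v.1| ≤ n ∧ |v.2 + 1| ≤ n) → f (v.1, v.2 + 1) = f v)
    (v : ℤ × ℤ) (hv : ¬ (|v.1| ≤ n ∧ |v.2| ≤ n)) : f v = f (n + 1, n + 1) := by
  have hor : ∀ y : ℤ, ¬ |y| ≤ n → ∀ a b, f (a, y) = f (b, y) := by
    intro y hy a b
    exact const_of_succ (fun x => f (x, y))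
      (fun k => h1 (k, y) (fun h => hy h.2) (fun h => hy h.2)) a b
  have ver : ∀ x : ℤ, ¬ |x| ≤ n → ∀ a b, f (x, a) = f (x, b) := by
    intro x hx a b
    exact const_of_succ (fun y => f (x, y))
      (fun k => h2 (x, k) (fun h => hx h.1) (fun h => hx h.1)) a b
  have hn1 : ¬ |n + 1| ≤ n := by
    rw [abs_of_nonneg (by omega)]; omega
  obtain ⟨x, y⟩ := v
  by_cases hx : |x| ≤ n
  · have hy : ¬ |y| ≤ n := fun hy => hv ⟨hx, hy⟩
    rw [hor y hy x (n + 1), ver (n + 1) hn1 y (n + 1)]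
  · rw [ver x hx y (n + 1), hor (n + 1) hn1 x (n + 1)]

/-- A finite shift-invariant set has a neighbourhood with a locally consistent selector. -/
lemma exists_selector [TopologicalSpace Q] [DiscreteTopology Q] (Z : Set (Config Q))
    (hZ : Z.Finite) (hinv : ShiftInvariant Z) :
    ∃ (U : Set (Config Q)) (g : Config Q → Config Q), IsOpen U ∧ Z ⊆ U ∧
      (∀ c ∈ U, g c ∈ Z ∧ g c 0 = c 0) ∧
      (∀ c ∈ U, ∀ e : ℤ × ℤ, e = (1, 0) ∨ e = (0, 1) → shiftC e c ∈ U →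
        g (shiftC e c) = shiftC e (g c)) := by
  classical
  have hsep : ∀ z z' : Config Q, ∃ x, z x = z' x → z = z' := by
    intro z z'
    by_cases h : z = z'
    · exact ⟨0, fun _ => h⟩
    · obtain ⟨x, hx⟩ := Function.ne_iff.mp h
      exact ⟨x, fun h' => absurd h' hx⟩
  choose f hf using hsep
  let W : Finset (ℤ × ℤ) := (hZ.toFinset ×ˢ hZ.toFinset).image (fun p => f p.1 p.2)
  have hW : ∀ z ∈ Z, ∀ z' ∈ Z, (∀ x ∈ W, z x = z' x) → z = z' := by
    intro z hz z' hz' h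
    apply hf
    apply h
    exact Finset.mem_image.mpr ⟨(z, z'), by simp [hz, hz'], rfl⟩
  let W' : Finset (ℤ × ℤ) :=
    insert 0 (W ∪ (W.image (· + ((1, 0) : ℤ × ℤ)) ∪ W.image (· + ((0, 1) : ℤ × ℤ))))
  let U : Set (Config Q) := {c | ∃ z ∈ Z, ∀ x ∈ W', c x = z x}
  have hg : ∀ c : Config Q, ∃ z, c ∈ U → z ∈ Z ∧ ∀ x ∈ W', c x = z x := by
    intro c
    by_cases h : c ∈ U
    · obtain ⟨z, hz⟩ := h
      exact ⟨z, fun _ => hz⟩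
    · exact ⟨c, fun h' => absurd h' h⟩
  choose g hg using hg
  refine ⟨U, g, ?_, ?_, ?_, ?_⟩
  · have : U = ⋃ z ∈ Z, ⋂ x ∈ W', {c : Config Q | c x = z x} := by
      ext c
      simp [U]
    rw [this]
    refine isOpen_biUnion fun z _ => isOpen_biInter_finset fun x _ => ?_
    have hcx : Continuous (fun c : Config Q => c x) := continuous_apply x
    exact (isOpen_discrete ({z x} : Set Q)).preimage hcx
  · intro z hz
    exact ⟨z, hz, fun _ _ => rfl⟩
  · intro c hc
    exact ⟨(hg c hc).1, ((hg c hc).2 0 (by simp [W'])).symm⟩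
  · intro c hc e he hec
    apply hW _ (hg _ hec).1 _ (hinv _ (hg c hc).1 e)
    intro x hx
    have h1 : x ∈ W' := by
      apply Finset.mem_insert_of_mem
      exact Finset.mem_union_left _ hx
    have h2 : x + e ∈ W' := by
      apply Finset.mem_insert_of_mem
      apply Finset.mem_union_right
      rcases he with rfl | rfl
      · exact Finset.mem_union_left _ (Finset.mem_image_of_mem _ hx)
      · exact Finset.mem_union_right _ (Finset.mem_image_of_mem _ hx)
    rw [← (hg _ hec).2 x h1]
    show c (x + e) = g c (x + e)
    exact (hg c hc).2 _ h2

/-- If all shifts of `c` by vectors outside a box lie in `U`, then `c` coincides outside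
the box with an element of `Z`. -/
lemma eq_outside (Z U : Set (Config Q)) (hinv : ShiftInvariant Z) (g : Config Q → Config Q)
    (hg : ∀ c ∈ U, g c ∈ Z ∧ g c 0 = c 0)
    (hge : ∀ c ∈ U, ∀ e : ℤ × ℤ, e = (1, 0) ∨ e = (0, 1) → shiftC e c ∈ U →
        g (shiftC e c) = shiftC e (g c))
    (c : Config Q) (n : ℤ) (hn : -1 ≤ n)
    (hc : ∀ v : ℤ × ℤ, ¬ (|v.1| ≤ n ∧ |v.2| ≤ n) → shiftC v c ∈ U) :
    ∃ z ∈ Z, ∀ v : ℤ × ℤ, ¬ (|v.1| ≤ n ∧ |v.2| ≤ n) → c v = z v := by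
  let h : ℤ × ℤ → Config Q := fun v => shiftC (-v) (g (shiftC v c))
  have hstep : ∀ v e : ℤ × ℤ, e = (1, 0) ∨ e = (0, 1) → shiftC v c ∈ U →
      shiftC (v + e) c ∈ U → h (v + e) = h v := by
    intro v e he h1 h2
    have : shiftC (v + e) c = shiftC e (shiftC v c) := by
      rw [shift_shift, add_comm]
    rw [this] at h2
    show shiftC (-(v + e)) (g (shiftC (v + e) c)) = shiftC (-v) (g (shiftC v c))
    rw [this, hge _ h1 e he h2, shift_shift]
    congr 1
    abel
  have hconst := const_outside h n hn
    (fun v h1 h2 => by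
      have := hstep v (1, 0) (Or.inl rfl) (hc v h1)
        (hc _ (by simpa using h2))
      rw [← this]; congr 1; ext <;> simp)
    (fun v h1 h2 => by
      have := hstep v (0, 1) (Or.inr rfl) (hc v h1)
        (hc _ (by simpa using h2))
      rw [← this]; congr 1; ext <;> simp)
  have hn1 : ¬ |n + 1| ≤ n := by
    rw [abs_of_nonneg (by omega)]; omega
  refine ⟨h (n + 1, n + 1), ?_, ?_⟩
  · exact hinv _ (hg _ (hc _ (fun hh => hn1 hh.1))).1 _
  · intro v hv
    rw [← hconst v hv]
    show c v = g (shiftC v c) (v + -v)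
    rw [add_neg_cancel, (hg _ (hc v hv)).2]
    simp [shiftC]

lemma exists_box (t : Finset (ℤ × ℤ)) :
    ∃ n : ℤ, 0 ≤ n ∧ ∀ v ∈ t, |v.1| ≤ n ∧ |v.2| ≤ n := by
  classical
  induction t using Finset.induction_on with
  | empty => exact ⟨0, le_refl _, by simp⟩
  | insert a s _ ih =>
    obtain ⟨n, hn, h⟩ := ih
    refine ⟨n + |a.1| + |a.2|, by positivity, ?_⟩
    intro v hv
    have := abs_nonneg a.1
    have := abs_nonneg a.2
    rcases Finset.mem_insert.mp hv with rfl | hv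
    · constructor <;> linarith
    · obtain ⟨h1, h2⟩ := h v hv
      constructor <;> linarith

lemma tilings_invariant (V : Finset (ℤ × ℤ)) (A : Set ({x // x ∈ V} → Q)) :
    ShiftInvariant (Tilings V A) := by
  intro c hc v t
  have := hc (t + v)
  convert this using 2
  simp only [shiftC]
  congr 1
  abel

lemma tilings_closed [Fintype Q] [TopologicalSpace Q] [DiscreteTopology Q]
    (V : Finset (ℤ × ℤ)) (A : Set ({x // x ∈ V} → Q)) : IsClosed (Tilings V A) := by
  have : Tilings V A =
      ⋂ t : ℤ × ℤ, (fun (c : Config Q) (y : {x // x ∈ V}) => c (t + y.1)) ⁻¹' A := by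
    ext c
    simp [Tilings, IsTiling]
  rw [this]
  refine isClosed_iInter fun t => ?_
  exact (isClosed_discrete A).preimage (by fun_prop)

/-- The gluing argument: a finite nontrivial defect in a (horizontally) periodic background
gives uncountably many tilings. -/
lemma uncountable_of_defect (V : Finset (ℤ × ℤ)) (A : Set ({x // x ∈ V} → Q))
    (d p : Config Q) (hd : d ∈ Tilings V A) (hp : p ∈ Tilings V A) (hdp : d ≠ p)
    (n : ℤ) (hn : 0 ≤ n) (hout : ∀ v : ℤ × ℤ, ¬ (|v.1| ≤ n ∧ |v.2| ≤ n) → d v = p v)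
    (P : ℤ) (hP : 0 < P) (hper : shiftC (P, 0) p = p) :
    ¬ (Tilings V A : Set (Config Q)).Countable := by
  classical
  obtain ⟨m, hm, hV⟩ := exists_box V
  have hperk : ∀ (k : ℤ) (x : ℤ × ℤ), p (x.1 - k * P, x.2) = p x := by
    intro k x
    have := const_of_succ (fun k : ℤ => p (x.1 - k * P, x.2)) (fun k => by
      have := congrFun hper (x.1 - (k + 1) * P, x.2)
      rw [← this]
      show p _ = p _
      congr 1
      ext
      · simp; ring
      · simp) k 0
    simpa using this
  obtain ⟨h, hh, q, hq⟩ : ∃ h : ℤ, n + m < h ∧ ∃ q : ℤ, h = q * P :=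
    ⟨(n + m + 1) * P, by nlinarith, _, rfl⟩
  obtain ⟨N, hN⟩ : ∃ N : ℤ, N = 2 * h := ⟨_, rfl⟩
  have hNpos : 0 < N := by omega
  have hperN : ∀ (k : ℤ) (x : ℤ × ℤ), p (x.1 - k * N, x.2) = p x := by
    intro k x
    rw [← hperk (k * 2 * q) x]
    congr 2
    rw [hN, hq]; ring
  have hdiv : ∀ a : ℤ, -h ≤ a - ((a + h) / N) * N ∧ a - ((a + h) / N) * N < h := by
    intro a
    have h1 := Int.emod_nonneg (a + h) hNpos.ne'
    have h2 := Int.emod_lt_of_pos (a + h) hNpos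
    have h3 := Int.emod_add_mul_ediv (a + h) N
    have h4 : N * ((a + h) / N) = ((a + h) / N) * N := mul_comm _ _
    constructor <;> linarith
  have houtN : ∀ (k : ℤ) (x : ℤ × ℤ), n < |x.1 - k * N| →
      d (x.1 - k * N, x.2) = p x := by
    intro k x hx
    rw [hout _ (fun hc => by have := hc.1; simp only at this; omega), hperN]
  let G : Set ℤ → Config Q := fun S x =>
    if (x.1 + h) / N ∈ S then d (x.1 - ((x.1 + h) / N) * N, x.2) else p x
  have hG : ∀ S (k : ℤ) (x : ℤ × ℤ), |x.1 - k * N| ≤ h + m →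
      G S x = if k ∈ S then d (x.1 - k * N, x.2) else p x := by
    intro S k x hx
    by_cases hk : (x.1 + h) / N = k
    · simp only [G, hk]
    · have hj := hdiv x.1
      simp only [G]
      generalize (x.1 + h) / N = j at hk hj ⊢
      rw [abs_le] at hx
      have hfar : n < |x.1 - j * N| ∧ n < |x.1 - k * N| := by
        rw [lt_abs, lt_abs]
        rcases lt_or_gt_of_ne hk with hlt | hlt
        · have : j * N + N ≤ k * N := by nlinarith
          constructor
          · left; linarith
          · right; linarith
        · have : k * N + N ≤ j * N := by nlinarith
          constructor
          · right; linarith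
          · left; linarith
      rw [houtN j x hfar.1, houtN k x hfar.2]
      simp
  have hGT : ∀ S, G S ∈ Tilings V A := by
    intro S t
    obtain ⟨k, hk⟩ : ∃ k : ℤ, |t.1 - k * N| ≤ h :=
      ⟨_, abs_le.mpr ⟨(hdiv t.1).1, (hdiv t.1).2.le⟩⟩
    have hwin : ∀ y : {x // x ∈ V}, |(t + y.1).1 - k * N| ≤ h + m := by
      intro y
      have h1 := (hV y.1 y.2).1
      rw [abs_le] at *
      simp only [Prod.fst_add]
      constructor <;> linarith [h1.1, h1.2, hk.1, hk.2]
    have hrw : (fun y : {x // x ∈ V} => G S (t + y.1)) = fun y : {x // x ∈ V} =>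
        if k ∈ S then d ((t + y.1).1 - k * N, (t + y.1).2) else p (t + y.1) := by
      funext y
      exact hG S k _ (hwin y)
    rw [hrw]
    by_cases hkS : k ∈ S
    · simp only [hkS, if_true]
      have := hd (t.1 - k * N, t.2)
      convert this using 3
      ext
      · simp; ring
      · simp
    · simp only [hkS, if_false]
      exact hp t
  obtain ⟨x0, hx0⟩ := Function.ne_iff.mp hdp
  have hx0n : |x0.1| ≤ n := by
    by_contra hcon
    exact hx0 (hout x0 (fun hc => hcon hc.1))
  have hGx : ∀ S (k : ℤ), G S (x0.1 + k * N, x0.2) = if k ∈ S then d x0 else p x0 := by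
    intro S k
    rw [hG S k _ (by simp only [add_sub_cancel_right]; linarith)]
    have h1 : p (x0.1 + k * N, x0.2) = p x0 := by
      rw [← hperN k (x0.1 + k * N, x0.2)]
      simp
    rw [h1]
    simp
  have hGinj : Function.Injective G := by
    intro S T hST
    ext k
    have := congrFun hST (x0.1 + k * N, x0.2)
    rw [hGx, hGx] at this
    by_cases h1 : k ∈ S <;> by_cases h2 : k ∈ T <;> simp_all
  intro hcount
  have : Countable (Tilings V A : Set (Config Q)) := hcount.to_subtype
  have hinj : Function.Injective (fun S : Set ℤ => (⟨G S, hGT S⟩ : Tilings V A)) := by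
    intro S T hST
    exact hGinj (congrArg Subtype.val hST)
  have hc : Countable (Set ℤ) := hinj.countable
  obtain ⟨e, he⟩ := exists_injective_nat (Set ℤ)
  exact Function.cantor_injective (fun S : Set ℤ => (e S : ℤ))
    (fun S T hST => he (Int.ofNat_inj.mp hST))

/-- Existence of a minimal infinite closed shift-invariant set of tilings. -/
lemma exists_minimal [Fintype Q] [TopologicalSpace Q] [DiscreteTopology Q]
    (X : Set (Config Q)) (hX : IsClosed X) (hXinv : ShiftInvariant X) (hXinf : X.Infinite) :
    ∃ Y : Set (Config Q), Minimal
      (· ∈ {Y : Set (Config Q) | IsClosed Y ∧ ShiftInvariant Y ∧ Y ⊆ X ∧ Y.Infinite}) Y := by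
  apply zorn_superset
  intro C hC hchain
  rcases C.eq_empty_or_nonempty with rfl | hne
  · exact ⟨X, ⟨hX, hXinv, subset_rfl, hXinf⟩, by simp⟩
  refine ⟨⋂₀ C, ⟨?_, ?_, ?_, ?_⟩, fun s hs => sInter_subset_of_mem hs⟩
  · exact isClosed_sInter fun s hs => (hC hs).1
  · intro c hc v s hs
    exact (hC hs).2.1 c (hc s hs) v
  · obtain ⟨s, hs⟩ := hne
    exact (sInter_subset_of_mem hs).trans (hC hs).2.2.1
  · intro hfin
    have hinv : ShiftInvariant (⋂₀ C) := by
      intro c hc v s hs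
      exact (hC hs).2.1 c (hc s hs) v
    obtain ⟨U, g, hU, hZU, hg, hge⟩ := exists_selector _ hfin hinv
    have hex : ∃ s ∈ C, s ⊆ U := by
      have : Nonempty C := hne.to_subtype
      have hdir : Directed (· ⊇ ·) (fun s : C => (s : Set (Config Q))) := by
        intro a b
        rcases hchain.total a.2 b.2 with h | h
        · exact ⟨a, subset_rfl, h⟩
        · exact ⟨b, h, subset_rfl⟩
      obtain ⟨s, hs⟩ := exists_subset_nhds_of_isCompact' hdir
        (fun s => (hC s.2).1.isCompact) (fun s => (hC s.2).1) (U := U)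
        (fun x hx => hU.mem_nhds (hZU (by rwa [sInter_eq_iInter])))
      exact ⟨s, s.2, hs⟩
    obtain ⟨s, hs, hsU⟩ := hex
    apply (hC hs).2.2.2
    apply hfin.subset
    intro c hc
    obtain ⟨z, hz, hcz⟩ := eq_outside _ U hinv g hg hge c (-1) le_rfl
      (fun v _ => hsU ((hC hs).2.1 c hc v))
    have : c = z := by
      funext v
      apply hcz v
      intro hh
      have := abs_nonneg v.1
      linarith [hh.1]
    rwa [this]

lemma exists_isolated {α : Type*} [TopologicalSpace α] [CompactSpace α] [T2Space α]
    (Y : Set α) (hY : IsClosed Y) (hc : Y.Countable) (hne : Y.Nonempty) :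
    ∃ d ∈ Y, ∃ U : Set α, IsOpen U ∧ U ∩ Y = {d} := by
  have : CompactSpace Y := isCompact_iff_compactSpace.mp hY.isCompact
  have : Countable Y := hc.to_subtype
  have : Nonempty Y := hne.to_subtype
  obtain ⟨y, z, hz⟩ := nonempty_interior_of_iUnion_of_closed
    (f := fun y : Y => ({y} : Set Y)) (fun y => isClosed_singleton)
    (by ext; simp)
  have hzy' : z ∈ ({y} : Set Y) := interior_subset hz
  have hzy : z = y := hzy'
  subst hzy
  have ho : IsOpen ({z} : Set Y) := by
    have : interior ({z} : Set Y) = {z} :=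
      subset_antisymm interior_subset (by simpa using hz)
    rw [← this]
    exact isOpen_interior
  obtain ⟨U, hU, hUz⟩ := isOpen_induced_iff.mp ho
  refine ⟨z, z.2, U, hU, ?_⟩
  ext a
  constructor
  · rintro ⟨ha, haY⟩
    have : (⟨a, haY⟩ : Y) ∈ Subtype.val ⁻¹' U := ha
    rw [hUz] at this
    have h2 : (⟨a, haY⟩ : Y) = z := this
    rw [← h2]; rfl
  · intro ha
    have ha' : a = z := ha
    have : z ∈ (Subtype.val ⁻¹' U : Set Y) := by rw [hUz]; rfl
    rw [ha']
    exact ⟨this, z.2⟩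

end Stmt19Aux

open Stmt19Aux

theorem stmt19 {Q : Type*} [Fintype Q] [Nonempty Q] [TopologicalSpace Q] [DiscreteTopology Q]
    (V : Finset (ℤ × ℤ)) (A : Set ({x // x ∈ V} → Q))
    (hcount : (Tilings V A : Set (Config Q)).Countable)
    (hinf : (Tilings V A : Set (Config Q)).Infinite) :
    ∃ c ∈ (Tilings V A : Set (Config Q)),
      (∃ v : ℤ × ℤ, v ≠ 0 ∧ shiftC v c = c) ∧ ¬ IsPeriodic c := by
  have hXc := tilings_closed V A
  have hXinv := tilings_invariant V A
  obtain ⟨Y, ⟨hYc, hYinv, hYX, hYinf⟩, hYmin⟩ := exists_minimal _ hXc hXinv hinf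
  obtain ⟨d, hdY, U, hU, hUY⟩ := exists_isolated Y hYc (hcount.mono hYX) hYinf.nonempty
  have hdU : d ∈ U := by
    have : d ∈ U ∩ Y := by rw [hUY]; rfl
    exact this.1
  let O : Set (Config Q) := ⋃ v : ℤ × ℤ, shiftC v ⁻¹' U
  have hO : IsOpen O := isOpen_iUnion fun v => hU.preimage (shift_cont v)
  have hdO : d ∈ O := mem_iUnion.mpr ⟨0, by simpa [shift_zero] using hdU⟩
  have hFinv : ShiftInvariant (Y \ O) := by
    rintro c ⟨hcY, hcO⟩ v
    refine ⟨hYinv c hcY v, fun hc => hcO ?_⟩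
    obtain ⟨w, hw⟩ := mem_iUnion.mp hc
    refine mem_iUnion.mpr ⟨w + v, ?_⟩
    rw [mem_preimage, shift_shift] at hw
    exact hw
  have hFc : IsClosed (Y \ O) := hYc.sdiff hO
  have hFfin : (Y \ O).Finite := by
    by_contra hF
    have := hYmin (y := Y \ O) ⟨hFc, hFinv, sdiff_subset.trans hYX, hF⟩ sdiff_subset
    exact (this hdY).2 hdO
  have horb : ∀ c ∈ Y, ∀ v : ℤ × ℤ, shiftC v c ∈ U → shiftC v c = d := by
    intro c hc v hv
    have : shiftC v c ∈ U ∩ Y := ⟨hv, hYinv c hc v⟩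
    rw [hUY] at this
    exact this
  have hnp : ¬ IsPeriodic d := by
    intro hper
    apply hYinf
    refine (hper.union hFfin).subset ?_
    intro c hc
    by_cases hcO : c ∈ O
    · left
      obtain ⟨v, hv⟩ := mem_iUnion.mp hcO
      refine ⟨-v, ?_⟩
      show shiftC (-v) d = c
      rw [← horb c hc v hv, shift_shift, neg_add_cancel, shift_zero]
    · right
      exact ⟨hc, hcO⟩
  refine ⟨d, hYX hdY, ?_, hnp⟩
  by_contra hno
  push Not at hno
  obtain ⟨U', g, hU', hFU', hg, hge⟩ := exists_selector _ hFfin hFinv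
  have hK : IsCompact (Y \ U') := (hYc.sdiff hU').isCompact
  obtain ⟨t, ht⟩ := hK.elim_finite_subcover (fun v : ℤ × ℤ => shiftC v ⁻¹' U)
    (fun v => hU.preimage (shift_cont v)) (by
      rintro c ⟨hcY, hcU'⟩
      by_contra hcO
      exact hcU' (hFU' ⟨hcY, hcO⟩))
  obtain ⟨n, hn, hbox⟩ := exists_box t
  have hout : ∀ v : ℤ × ℤ, ¬ (|v.1| ≤ n ∧ |v.2| ≤ n) → shiftC v d ∈ U' := by
    intro v hv
    by_contra hvU
    have h1 := ht ⟨hYinv d hdY v, hvU⟩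
    simp only [mem_iUnion, mem_preimage] at h1
    obtain ⟨w, hwt, hw⟩ := h1
    have h2 := horb _ (hYinv d hdY v) w hw
    rw [shift_shift] at h2
    have h3 : w + v = 0 := by
      by_contra h3
      exact hno _ h3 h2
    have h4 : v = -w := (neg_eq_of_add_eq_zero_right h3).symm
    apply hv
    rw [h4]
    simpa using hbox w hwt
  obtain ⟨p, hpF, hdp⟩ := eq_outside _ U' hFinv g hg hge d n (by omega) hout
  have hne : d ≠ p := by
    rintro rfl
    exact hpF.2 hdO
  obtain ⟨P, hP, hper⟩ : ∃ P : ℤ, 0 < P ∧ shiftC (P, 0) p = p := by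
    have hmaps : MapsTo (fun k : ℤ => shiftC (k, 0) p) univ (Y \ O) :=
      fun k _ => hFinv p hpF _
    obtain ⟨a, _, b, _, hab, heq⟩ :=
      infinite_univ.exists_lt_map_eq_of_mapsTo hmaps hFfin
    refine ⟨b - a, by omega, ?_⟩
    have h1 := congrArg (shiftC (-a, 0)) heq
    simp only [shift_shift, Prod.mk_add_mk, neg_add_cancel, add_zero] at h1
    have h2 : shiftC ((0, 0) : ℤ × ℤ) p = p := shift_zero p
    rw [h2] at h1
    rw [show b - a = -a + b by ring]
    exact h1.symm
  exact uncountable_of_defect V A d p (hYX hdY) (hYX hpF.1) hne n hn hdp P hP hper hcount
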